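/- arXiv:2204.08760 — 2 statements merged into one kernel-verified Lean document; each statement's English description precedes it below -/
import Mathlib

section
/- Let q = p^t be a prime power, n > 2, δ ≥ 1 an integer, k ≥ 1, u_1, …, u_k ∈ GF(q^n) nonzero, c ∈ GF(q^n) (with c ≠ 1 if p = 2), F : GF(q^n) → GF(q^n) a function with c-differential uniformity _cΔ_F ≤ δ, f_1, …, f_k : GF(q^n) → GF(q), and H(x) = F(x) + Σ_{t=1}^k u_t·f_t(x). Then _cΔ_H > δ if and only if there exist a ∈ GF(q^n) and pairwise distinct elements x₁, …, x_{δ+1} ∈ GF(q^n) such that the k-tuples (f_1(x_i+a) − c·f_1(x_i), …, f_k(x_i+a) − c·f_k(x_i)), i = 1, …, δ+1, are not all equal, and for all i ≠ j one has (F(x_i+a) − c·F(x_i)) − (F(x_j+a) − c·F(x_j)) = −Σ_{t=1}^k u_t·((f_t(x_i+a) − c·f_t(x_i)) − (f_t(x_j+a) − c·f_t(x_j))). -/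
open scoped Classical

/-- The number of solutions `x` of `F(x+a) - c·F(x) = b`. -/
noncomputable def cDeltaCount {K : Type*} [Field K] [Fintype K]
    (c : K) (F : K → K) (a b : K) : ℕ :=
  (Finset.univ.filter fun x => F (x + a) - c * F x = b).card

/-- The `c`-differential uniformity: the maximum of `cDeltaCount` over all `a, b`,
where `a ≠ 0` is required when `c = 1`. -/
noncomputable def cDU {K : Type*} [Field K] [Fintype K] (c : K) (F : K → K) : ℕ :=
  (Finset.univ.filter fun ab : K × K => c = 1 → ab.1 ≠ 0).sup
    fun ab => cDeltaCount c F ab.1 ab.2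

/-- `F` is perfect `c`-nonlinear. -/
def IsPcN {K : Type*} [Field K] [Fintype K] (c : K) (F : K → K) : Prop :=
  cDU c F = 1

/-!
The `c`-derivative at `a` is linear in the function, so `H` takes equal `c`-derivatives at `xᵢ` and
`xⱼ` exactly when the displayed identity between the `c`-derivatives of `F` and of the `f_s` holds.
Thus `_cΔ_H > δ` asks for `δ + 1` distinct points satisfying that identity. If all their tuples
agreed, the `c`-derivatives of `F` would agree at these points too, contradicting `_cΔ_F ≤ δ`.
In the other direction the only issue is the pair `c = 1`, `a = 0`, which the definition of `_cΔ_H`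
excludes: there every `c`-derivative vanishes, so the tuples cannot differ.
-/

/-- The `c`-derivative `_cD_aF` of `F` at `a`, whose largest fibre over the admissible `a` has size
`cDU c F`. -/
def cDerivative {R : Type*} [Ring R] (c : R) (F : R → R) (a x : R) : R :=
  F (x + a) - c * F x

theorem cDerivative_one_zero {R : Type*} [Ring R] (F : R → R) (x : R) :
    cDerivative 1 F 0 x = 0 := by
  simp [cDerivative]

section CommRing

variable {R ι : Type*} [CommRing R] [Fintype ι]
  (c : R) (F : R → R) (u : ι → R) (f : ι → R → R) (a : R)

theorem cDerivative_add_sum_mul (x : R) :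
    cDerivative c (fun z => F z + ∑ s, u s * f s z) a x =
      cDerivative c F a x + ∑ s, u s * cDerivative c (f s) a x := by
  simp only [cDerivative, mul_sub, mul_left_comm _ c, Finset.sum_sub_distrib, ← Finset.mul_sum]
  ring

theorem cDerivative_add_sum_mul_eq_iff (x y : R) :
    cDerivative c (fun z => F z + ∑ s, u s * f s z) a x =
        cDerivative c (fun z => F z + ∑ s, u s * f s z) a y ↔
      cDerivative c F a x - cDerivative c F a y =
        -∑ s, u s * (cDerivative c (f s) a x - cDerivative c (f s) a y) := by
  simp only [cDerivative_add_sum_mul, mul_sub, Finset.sum_sub_distrib]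
  constructor <;> intro h <;> linear_combination h

end CommRing

theorem exists_lt_card_fiber_iff {α β : Type*} [Fintype α] (g : α → β) (m : ℕ) :
    (∃ b, m < (Finset.univ.filter fun x => g x = b).card) ↔
      ∃ x : Fin (m + 1) → α, Function.Injective x ∧ ∀ i j, g (x i) = g (x j) := by
  simp only [← Nat.succ_le_iff, ← Fintype.card_subtype]
  constructor
  · rintro ⟨b, hb⟩
    obtain ⟨e⟩ : Nonempty (Fin (m + 1) ↪ {x // g x = b}) :=
      Function.Embedding.nonempty_of_card_le (by simpa using hb)
    exact ⟨fun i => e i, Subtype.val_injective.comp e.injective,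
      fun i j => (e i).2.trans (e j).2.symm⟩
  · rintro ⟨x, hx, hg⟩
    let toFiber (i : Fin (m + 1)) : {y // g y = g (x 0)} := ⟨x i, hg i 0⟩
    have toFiber_injective : Function.Injective toFiber :=
      fun _ _ h => hx (congrArg Subtype.val h)
    exact ⟨g (x 0), by simpa using Fintype.card_le_of_injective toFiber toFiber_injective⟩

theorem lt_cDU_iff {K : Type*} [Field K] [Fintype K] (c : K) (F : K → K) (m : ℕ) :
    m < cDU c F ↔ ∃ a, (c = 1 → a ≠ 0) ∧ ∃ x : Fin (m + 1) → K, Function.Injective x ∧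
      ∀ i j, cDerivative c F a (x i) = cDerivative c F a (x j) := by
  simp only [cDU, cDeltaCount, Finset.lt_sup_iff, Finset.mem_filter, Finset.mem_univ, true_and,
    Prod.exists, exists_and_left]
  exact exists_congr fun a => and_congr_right fun _ =>
    exists_lt_card_fiber_iff (cDerivative c F a) m

theorem statement7_general {K ι : Type*} [Field K] [Fintype K] [Fintype ι] {δ : ℕ}
    (u : ι → K) (c : K) (F : K → K) (hF : cDU c F ≤ δ) (f : ι → K → K) :
    δ < cDU c (fun x => F x + ∑ s, u s * f s x) ↔
      ∃ (a : K) (x : Fin (δ + 1) → K), Function.Injective x ∧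
        (¬ ∀ i j s, cDerivative c (f s) a (x i) = cDerivative c (f s) a (x j)) ∧
        ∀ i j, i ≠ j →
          cDerivative c F a (x i) - cDerivative c F a (x j) =
            -∑ s, u s * (cDerivative c (f s) a (x i) - cDerivative c (f s) a (x j)) := by
  simp only [lt_cDU_iff, cDerivative_add_sum_mul_eq_iff]
  constructor
  · rintro ⟨a, ha, x, hx, heq⟩
    refine ⟨a, x, hx, fun htuples_eq => hF.not_gt ?_, fun i j _ => heq i j⟩
    refine (lt_cDU_iff c F δ).2 ⟨a, ha, x, hx, fun i j => sub_eq_zero.1 ?_⟩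
    simpa [htuples_eq i j] using heq i j
  · rintro ⟨a, x, hx, hne, heq⟩
    refine ⟨a, ?_, x, hx, fun i j => ?_⟩
    · rintro rfl rfl
      exact hne fun i j s => by simp only [cDerivative_one_zero]
    · obtain rfl | hij := eq_or_ne i j
      · simp
      · exact heq i j hij

theorem statement7 (p t n : ℕ) (hp : p.Prime) (ht : 1 ≤ t) (hn : 2 < n)
    (K : Type*) [Field K] [Fintype K] (hK : Nat.card K = (p ^ t) ^ n)
    (Fq : Subfield K) (hFq : Nat.card Fq = p ^ t)
    (δ : ℕ) (hδ : 1 ≤ δ)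
    (k : ℕ) (hk : 1 ≤ k)
    (u : Fin k → K) (hu : ∀ i, u i ≠ 0)
    (c : K) (hc : p = 2 → c ≠ 1)
    (F : K → K) (hF : cDU c F ≤ δ)
    (f : Fin k → K → Fq) :
    δ < cDU c (fun x => F x + ∑ i, u i * (f i x : K)) ↔
      ∃ (a : K) (x : Fin (δ + 1) → K), Function.Injective x ∧
        (¬ ∀ (i j : Fin (δ + 1)) (s : Fin k),
            (f s (x i + a) : K) - c * (f s (x i) : K) =
              (f s (x j + a) : K) - c * (f s (x j) : K)) ∧
        (∀ i j, i ≠ j →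
          (F (x i + a) - c * F (x i)) - (F (x j + a) - c * F (x j)) =
            -(∑ s, u s * (((f s (x i + a) : K) - c * (f s (x i) : K)) -
                ((f s (x j + a) : K) - c * (f s (x j) : K))))) :=
  statement7_general u c F hF fun s x => (f s x : K)
end

section
/- Let n ≥ 4 be an even integer, let L : GF(2^n) → GF(2^n) be a bijective F₂-linear map (a 2-linearized permutation polynomial) with L(1) = 1, let s ≥ 1, let 1 ≤ k₁ < k₂ < … < k_s ≤ n−1 be integers, let g₁, …, g_s ≥ 1 be integers, and let δ₁, …, δ_s ∈ GF(2^n). Define H : GF(2^n) → GF(2^n) by H(x) = L(x) + Π_{i=1}^{s} (Tr_n(x^{2^{k_i}+1} + δ_i))^{g_i}, where Tr_n : GF(2^n) → GF(2) is the absolute trace and the product (an element of GF(2)) is viewed in GF(2^n). Then H is a permutation of GF(2^n) (i.e., PcN for c = 0), and for every c ∈ GF(2^n) \ {1} the c-differential uniformity of H is at most 2 (i.e., H is either APcN or PcN with respect to c). -/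
open scoped Classical

/-!
Let `F = GF(q)` with `q` even, `K / F` of even degree, and `T` the product of traces. In
characteristic two, replacing `x` by `x + t` with `t ∈ F` changes `Tr (x ^ (q ^ k + 1))` by
`t * (Tr (x ^ q ^ k) + Tr x) + t ^ 2 * Tr 1`, which vanishes because conjugates have equal trace
and `Tr 1` is the degree. So `T` is invariant under translation by `F`, while `L` fixes `F`
pointwise. Hence `H x = L (x + T x)`, and `x ↦ x + T x` is injective because
`T (x + T x) = T x`.

For the uniformity, write `H (x + a) - c * H x = (1 - c) * H x + (H (x + a) - H x)`. The last
difference lies in the coset `L a + F`, so it takes at most `q` values, and when `c ≠ 1` each of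
them determines `H x`, hence `x`, from the value of the whole expression.
-/

theorem injective_add_of_map_add_self {G : Type*} [Add G] [IsRightCancelAdd G] {f : G → G}
    (hf : ∀ x, f (x + f x) = f x) : Function.Injective fun x => x + f x := by
  intro x y hxy
  have hfxy : f x = f y := calc
    f x = f (x + f x) := (hf x).symm
    _ = f (y + f y) := congrArg f hxy
    _ = f y := hf y
  exact add_right_cancel (b := f y) (by simpa only [hfxy] using hxy)

theorem injective_map_add_of_translation_invariant {G A : Type*} [AddMonoid G]
    [IsRightCancelAdd G] {L : G →+ G} (hL : Function.Injective L) {φ : A → G}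
    (hLφ : ∀ t, L (φ t) = φ t) {T : G → A} (hT : ∀ x t, T (x + φ t) = T x) :
    Function.Injective fun x => L x + φ (T x) := by
  have hfactor : (fun x => L x + φ (T x)) = L ∘ fun x => x + φ (T x) := by
    funext x
    rw [Function.comp_apply, map_add, hLφ]
  rw [hfactor]
  exact hL.comp (injective_add_of_map_add_self fun x => congrArg φ (hT x (T x)))

section CDifferential

variable {K : Type*} [Field K] [Fintype K]

theorem cDU_le_iff {c : K} {F : K → K} {m : ℕ} :
    cDU c F ≤ m ↔ ∀ a b, (c = 1 → a ≠ 0) → cDeltaCount c F a b ≤ m := by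
  simp [cDU]

theorem one_le_cDU (c : K) (F : K → K) : 1 ≤ cDU c F := by
  have hcount : 1 ≤ cDeltaCount c F 1 (F (0 + 1) - c * F 0) :=
    Finset.card_pos.mpr ⟨0, by simp only [Finset.mem_filter, Finset.mem_univ, true_and]⟩
  exact hcount.trans (cDU_le_iff.mp le_rfl 1 _ fun _ => one_ne_zero)

theorem isPcN_zero_of_injective {F : K → K} (hF : Function.Injective F) : IsPcN 0 F := by
  refine le_antisymm (cDU_le_iff.mpr fun a b _ => ?_) (one_le_cDU 0 F)
  refine Finset.card_le_one.mpr fun x hx y hy => ?_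
  simp only [Finset.mem_filter, Finset.mem_univ, true_and, zero_mul, sub_zero] at hx hy
  exact add_right_cancel (hF (hx.trans hy.symm))

theorem cDeltaCount_le_ncard_range_sub {c : K} (hc : c ≠ 1) {F : K → K}
    (hF : Function.Injective F) (a b : K) :
    cDeltaCount c F a b ≤ (Set.range fun x => F (x + a) - F x).ncard := by
  rw [Set.ncard_eq_toFinset_card']
  refine Finset.card_le_card_of_injOn (fun x => F (x + a) - F x) (by simp [Set.MapsTo]) ?_
  intro x hx y hy hxy
  simp only [Finset.coe_filter, Finset.mem_univ, true_and, Set.mem_ofPred_eq] at hx hy hxy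
  refine hF (mul_left_cancel₀ (sub_ne_zero.mpr hc.symm) ?_)
  linear_combination hx - hy - hxy

theorem cDU_map_add_map_le_card {A Φ : Type*} [AddGroup A] [Finite A] [FunLike Φ A K]
    [AddMonoidHomClass Φ A K] {c : K} (hc : c ≠ 1) {L : K →+ K} {φ : Φ} {T : K → A}
    (hF : Function.Injective fun x => L x + φ (T x)) :
    cDU c (fun x => L x + φ (T x)) ≤ Nat.card A := by
  refine cDU_le_iff.mpr fun a b _ => (cDeltaCount_le_ncard_range_sub hc hF a b).trans ?_
  have hsub : (Set.range fun x => L (x + a) + φ (T (x + a)) - (L x + φ (T x))) ⊆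
      Set.range fun t => L a + φ t := by
    rintro _ ⟨x, rfl⟩
    refine ⟨T (x + a) - T x, ?_⟩
    simp only [map_add, map_sub]
    ring
  calc _ ≤ (Set.range fun t => L a + φ t).ncard := Set.ncard_le_ncard hsub
    _ ≤ Nat.card A := Finite.card_range_le _

end CDifferential

theorem trace_algEquiv_mul_self_translation_invariant {R S : Type*} [CommRing R] [CharP R 2]
    [CommRing S] [Algebra R S] [Module.Free R S] (hRS : Even (Module.finrank R S))
    (σ : S ≃ₐ[R] S) (x : S) (t : R) :
    Algebra.trace R S (σ (x + algebraMap R S t) * (x + algebraMap R S t)) =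
      Algebra.trace R S (σ x * x) := by
  have hexpand : σ (x + algebraMap R S t) * (x + algebraMap R S t) =
      σ x * x + t • (σ x + x) + algebraMap R S (t * t) := by
    simp only [map_add, AlgEquiv.commutes, map_mul, Algebra.smul_def]
    ring
  have hlinear : Algebra.trace R S (t • (σ x + x)) = 0 := by
    rw [map_smul, map_add, Algebra.trace_eq_of_algEquiv, CharTwo.add_self_eq_zero, smul_zero]
  have hconst : Algebra.trace R S (algebraMap R S (t * t)) = 0 := by
    have : Nontrivial R := CharP.nontrivial_of_char_ne_one (v := 2) (by decide)
    obtain ⟨m, hm⟩ := hRS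
    rw [Algebra.trace_algebraMap, hm, add_nsmul, CharTwo.add_self_eq_zero]
  rw [hexpand, map_add, map_add, hlinear, hconst, add_zero, add_zero]

theorem trace_pow_card_pow_add_one_translation_invariant {F K : Type*} [Field F] [CharP F 2]
    [Field K] [Finite K] [Algebra F K] (hFK : Even (Module.finrank F K)) (k : ℕ) (x δ : K) (t : F) :
    Algebra.trace F K ((x + algebraMap F K t) ^ (Nat.card F ^ k + 1) + δ) =
      Algebra.trace F K (x ^ (Nat.card F ^ k + 1) + δ) := by
  have : Finite F := Finite.of_injective _ (algebraMap F K).injective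
  have := Fintype.ofFinite F
  have hσ (y : K) : y ^ (Nat.card F ^ k + 1) =
      (FiniteField.frobeniusAlgEquivOfAlgebraic F K ^ k) y * y := by
    rw [AlgEquiv.coe_pow, FiniteField.coe_frobeniusAlgEquivOfAlgebraic_iterate,
      Fintype.card_eq_nat_card, pow_succ]
  rw [map_add, map_add, hσ, hσ, trace_algEquiv_mul_self_translation_invariant hFK]

theorem finrank_eq_of_natCard_eq_pow {F V : Type*} [DivisionRing F] [Finite F] [AddCommGroup V]
    [Module F V] [Module.Finite F V] {n : ℕ} (hV : Nat.card V = Nat.card F ^ n) :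
    Module.finrank F V = n :=
  Nat.pow_right_injective Finite.one_lt_card (Module.natCard_eq_pow_finrank.symm.trans hV)

theorem map_algebraMap_zmod {p : ℕ} {R S : Type*} [Ring R] [Algebra (ZMod p) R] [Ring S]
    [Algebra (ZMod p) S] {L : R →+ S} (hL1 : L 1 = 1) (t : ZMod p) :
    L (algebraMap (ZMod p) R t) = algebraMap (ZMod p) S t := by
  rw [Algebra.algebraMap_eq_smul_one, ZMod.map_smul, hL1, Algebra.algebraMap_eq_smul_one]

theorem statement12_general {F K ι : Type*} [Field F] [CharP F 2] [Field K] [Fintype K]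
    [Algebra F K] [Fintype ι] {q n : ℕ} (hF : Nat.card F = q) (hn : Even n)
    (hK : Nat.card K = q ^ n) {L : K →+ K} (hL : Function.Injective L)
    (hLF : ∀ t, L (algebraMap F K t) = algebraMap F K t) (k g : ι → ℕ) (δ : ι → K) :
    IsPcN (0 : K)
        (fun x => L x + ∏ i, (∑ j ∈ Finset.range n, (x ^ (q ^ k i + 1) + δ i) ^ q ^ j) ^ g i) ∧
      ∀ c : K, c ≠ 1 →
        cDU c (fun x => L x +
          ∏ i, (∑ j ∈ Finset.range n, (x ^ (q ^ k i + 1) + δ i) ^ q ^ j) ^ g i) ≤ q := by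
  subst hF
  have : Finite F := Finite.of_injective _ (algebraMap F K).injective
  obtain rfl := finrank_eq_of_natCard_eq_pow hK
  simp only [← FiniteField.algebraMap_trace_eq_sum_pow, ← map_pow, ← map_prod]
  have hinj := injective_map_add_of_translation_invariant hL hLF
    (T := fun x => ∏ i, Algebra.trace F K (x ^ (Nat.card F ^ k i + 1) + δ i) ^ g i)
    fun x t => Finset.prod_congr rfl fun i _ =>
      congrArg (· ^ g i) (trace_pow_card_pow_add_one_translation_invariant hn (k i) x (δ i) t)
  exact ⟨isPcN_zero_of_injective hinj, fun c hc => cDU_map_add_map_le_card hc hinj⟩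

theorem statement12 (n : ℕ) (hn : 4 ≤ n) (hne : Even n)
    (K : Type*) [Field K] [Fintype K] (hK : Nat.card K = 2 ^ n)
    (L : K → K) (hLbij : Function.Bijective L)
    (hLadd : ∀ x y, L (x + y) = L x + L y) (hL1 : L 1 = 1)
    (s : ℕ) (hs : 1 ≤ s)
    (k : Fin s → ℕ) (hkmono : StrictMono k)
    (hk : ∀ i, 1 ≤ k i ∧ k i ≤ n - 1)
    (g : Fin s → ℕ) (hg : ∀ i, 1 ≤ g i)
    (δ : Fin s → K) :
    IsPcN (0 : K)
        (fun x => L x + ∏ i : Fin s,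
          (∑ j ∈ Finset.range n, (x ^ (2 ^ k i + 1) + δ i) ^ 2 ^ j) ^ g i) ∧
      ∀ c : K, c ≠ 1 →
        cDU c (fun x => L x + ∏ i : Fin s,
          (∑ j ∈ Finset.range n, (x ^ (2 ^ k i + 1) + δ i) ^ 2 ^ j) ^ g i) ≤ 2 := by
  have : CharP K 2 := charP_of_card_eq_prime_pow (Nat.card_eq_fintype_card.symm.trans hK)
  let _ := ZMod.algebra K 2
  exact statement12_general (Nat.card_zmod 2) hne hK (L := .mk' L hLadd) hLbij.injective
    (map_algebraMap_zmod hL1) k g δ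
end
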